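/- arXiv:1801.07524 — 2 statements merged into one kernel-verified Lean document; each statement's English description precedes it below -/
import Mathlib

section
/- In the algebra SLF(Ū_q) with convolution product, for every 1 ≤ s ≤ p−1 one has [s] · (χ^+_2 G_s) = [s−1] G_{s−1} + [s+1] G_{s+1}, with the conventions G_0 = 0 and G_p = 0. Explicitly: χ^+_2 G_1 = [2] G_2; χ^+_2 G_s = ([s−1]/[s]) G_{s−1} + ([s+1]/[s]) G_{s+1} for 2 ≤ s ≤ p−2; and χ^+_2 G_{p−1} = [2] G_{p−2}. -/
noncomputable section

open scoped TensorProduct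

namespace Uqsl2

/-- Generators of the restricted quantum group. -/
inductive gen : Type | E | F | K | Kinv

/-- The primitive `2p`-th root of unity `q = e^{iπ/p}`. -/
def q (p : ℕ) : ℂ := Complex.exp (Real.pi * Complex.I / p)

/-- The `q`-integer `[n] = (q^n - q^{-n})/(q - q^{-1})`. -/
def qi (p : ℕ) (n : ℤ) : ℂ := (q p ^ n - q p ^ (-n)) / (q p - (q p)⁻¹)

/-- The `q`-factorial `[m]!`. -/
def qfact (p m : ℕ) : ℂ := ∏ i ∈ Finset.range m, qi p (i + 1)

open FreeAlgebra in
/-- The defining relations of `Ū_q(sl₂)`. -/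
inductive rel (p : ℕ) : FreeAlgebra ℂ gen → FreeAlgebra ℂ gen → Prop
  | KKinv : rel p (ι ℂ gen.K * ι ℂ gen.Kinv) 1
  | KinvK : rel p (ι ℂ gen.Kinv * ι ℂ gen.K) 1
  | Ep : rel p (ι ℂ gen.E ^ p) 0
  | Fp : rel p (ι ℂ gen.F ^ p) 0
  | K2p : rel p (ι ℂ gen.K ^ (2 * p)) 1
  | KE : rel p (ι ℂ gen.K * ι ℂ gen.E) (q p ^ 2 • (ι ℂ gen.E * ι ℂ gen.K))
  | KF : rel p (ι ℂ gen.K * ι ℂ gen.F) ((q p ^ 2)⁻¹ • (ι ℂ gen.F * ι ℂ gen.K))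
  | EF : rel p (ι ℂ gen.E * ι ℂ gen.F - ι ℂ gen.F * ι ℂ gen.E)
             ((q p - (q p)⁻¹)⁻¹ • (ι ℂ gen.K - ι ℂ gen.Kinv))

/-- The restricted quantum group `Ū_q(sl₂)`, presented by generators and relations. -/
abbrev Uq (p : ℕ) := RingQuot (rel p)

def EE (p : ℕ) : Uq p := RingQuot.mkAlgHom ℂ (rel p) (FreeAlgebra.ι ℂ gen.E)
def FF (p : ℕ) : Uq p := RingQuot.mkAlgHom ℂ (rel p) (FreeAlgebra.ι ℂ gen.F)
def KK (p : ℕ) : Uq p := RingQuot.mkAlgHom ℂ (rel p) (FreeAlgebra.ι ℂ gen.K)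
def KKinv (p : ℕ) : Uq p := RingQuot.mkAlgHom ℂ (rel p) (FreeAlgebra.ι ℂ gen.Kinv)

/-! ### The simple modules `X^α(s)` as matrix representations -/

/-- Matrix of `K` on `X^α(s)` in the canonical basis. -/
def XK (p : ℕ) (α : ℂ) (s : ℕ) : Matrix (Fin s) (Fin s) ℂ :=
  Matrix.diagonal fun i => α * q p ^ ((s : ℤ) - 1 - 2 * (i : ℕ))

/-- Matrix of `E` on `X^α(s)` in the canonical basis. -/
def XE (p : ℕ) (α : ℂ) (s : ℕ) : Matrix (Fin s) (Fin s) ℂ :=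
  Matrix.of fun i j =>
    if (i : ℕ) + 1 = (j : ℕ) then α * qi p (j : ℕ) * qi p ((s : ℤ) - (j : ℕ)) else 0

/-- Matrix of `F` on `X^α(s)` in the canonical basis. -/
def XF (s : ℕ) : Matrix (Fin s) (Fin s) ℂ :=
  Matrix.of fun i j => if (i : ℕ) = (j : ℕ) + 1 then (1 : ℂ) else 0

/-- The statement that `ρX α s` is the representation on `X^α(s)` for the relevant
values of `α` and `s`. -/
def IsXRep (p : ℕ) (ρX : (α : ℂ) → (s : ℕ) → (Uq p →ₐ[ℂ] Matrix (Fin s) (Fin s) ℂ)) : Prop :=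
  ∀ α : ℂ, (α = 1 ∨ α = -1) → ∀ s : ℕ, 1 ≤ s → s ≤ p →
    ρX α s (KK p) = XK p α s ∧ ρX α s (EE p) = XE p α s ∧ ρX α s (FF p) = XF s

/-! ### The projective modules `P^α(s)` as matrix representations -/

/-- Index for the standard basis `(b_i, x_j, y_k, a_l)` of `P^α(s)`. -/
abbrev PIdx (p s : ℕ) := Fin s ⊕ (Fin (p - s) ⊕ (Fin (p - s) ⊕ Fin s))

/-- Diagonal of the matrix of `K` on `P^α(s)`. -/
def PKdiag (p : ℕ) (α : ℂ) (s : ℕ) : PIdx p s → ℂ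
  | .inl i => α * q p ^ ((s : ℤ) - 1 - 2 * (i : ℕ))
  | .inr (.inl j) => -α * q p ^ ((p : ℤ) - s - 1 - 2 * (j : ℕ))
  | .inr (.inr (.inl k)) => -α * q p ^ ((p : ℤ) - s - 1 - 2 * (k : ℕ))
  | .inr (.inr (.inr l)) => α * q p ^ ((s : ℤ) - 1 - 2 * (l : ℕ))

/-- Matrix of `K` on `P^α(s)` in the standard basis. -/
def PK (p : ℕ) (α : ℂ) (s : ℕ) : Matrix (PIdx p s) (PIdx p s) ℂ :=
  Matrix.diagonal (PKdiag p α s)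

/-- Matrix of `E` on `P^α(s)` in the standard basis. -/
def PE (p : ℕ) (α : ℂ) (s : ℕ) : Matrix (PIdx p s) (PIdx p s) ℂ :=
  Matrix.of fun i j =>
    match i, j with
    | .inl i, .inl j =>
        if (i : ℕ) + 1 = (j : ℕ) then α * qi p (j : ℕ) * qi p ((s : ℤ) - (j : ℕ)) else 0
    | .inr (.inl jx), .inl j => if (j : ℕ) = 0 ∧ (jx : ℕ) + 1 = p - s then 1 else 0
    | .inr (.inr (.inr l)), .inl j => if (l : ℕ) + 1 = (j : ℕ) then 1 else 0
    | .inr (.inl i), .inr (.inl j) =>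
        if (i : ℕ) + 1 = (j : ℕ) then -α * qi p (j : ℕ) * qi p ((p : ℤ) - s - (j : ℕ)) else 0
    | .inr (.inr (.inl i)), .inr (.inr (.inl k)) =>
        if (i : ℕ) + 1 = (k : ℕ) then -α * qi p (k : ℕ) * qi p ((p : ℤ) - s - (k : ℕ)) else 0
    | .inr (.inr (.inr l)), .inr (.inr (.inl k)) =>
        if (k : ℕ) = 0 ∧ (l : ℕ) + 1 = s then 1 else 0
    | .inr (.inr (.inr i)), .inr (.inr (.inr l)) =>
        if (i : ℕ) + 1 = (l : ℕ) then α * qi p (l : ℕ) * qi p ((s : ℤ) - (l : ℕ)) else 0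
    | _, _ => 0

/-- Matrix of `F` on `P^α(s)` in the standard basis. -/
def PF (p s : ℕ) : Matrix (PIdx p s) (PIdx p s) ℂ :=
  Matrix.of fun i j =>
    match i, j with
    | .inl i, .inl j => if (i : ℕ) = (j : ℕ) + 1 then (1 : ℂ) else 0
    | .inr (.inr (.inl k)), .inl j => if (j : ℕ) + 1 = s ∧ (k : ℕ) = 0 then 1 else 0
    | .inr (.inl i), .inr (.inl j) => if (i : ℕ) = (j : ℕ) + 1 then 1 else 0
    | .inr (.inr (.inr l)), .inr (.inl j) => if (j : ℕ) + 1 = p - s ∧ (l : ℕ) = 0 then 1 else 0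
    | .inr (.inr (.inl i)), .inr (.inr (.inl k)) => if (i : ℕ) = (k : ℕ) + 1 then 1 else 0
    | .inr (.inr (.inr i)), .inr (.inr (.inr l)) => if (i : ℕ) = (l : ℕ) + 1 then 1 else 0
    | _, _ => 0

/-- The statement that `ρP α s` is the representation on `P^α(s)` for the relevant
values of `α` and `s`. -/
def IsPRep (p : ℕ)
    (ρP : (α : ℂ) → (s : ℕ) → (Uq p →ₐ[ℂ] Matrix (PIdx p s) (PIdx p s) ℂ)) : Prop :=
  ∀ α : ℂ, (α = 1 ∨ α = -1) → ∀ s : ℕ, 1 ≤ s → s ≤ p - 1 →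
    ρP α s (KK p) = PK p α s ∧ ρP α s (EE p) = PE p α s ∧ ρP α s (FF p) = PF p s

/-! ### Symmetric linear forms, characters, and the forms `G_s` -/

/-- Symmetric linear forms. -/
def IsSLF (p : ℕ) (φ : Uq p →ₗ[ℂ] ℂ) : Prop := ∀ x y : Uq p, φ (x * y) = φ (y * x)

/-- The character of a matrix representation. -/
def chiOf (p : ℕ) {n : Type} [Fintype n] [DecidableEq n]
    (ρ : Uq p →ₐ[ℂ] Matrix n n ℂ) : Uq p →ₗ[ℂ] ℂ :=
  (Matrix.traceLinearMap n ℂ ℂ).comp ρ.toLinearMap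

/-- The matrix entry functional. -/
def entry {n : Type} (i j : n) : Matrix n n ℂ →ₗ[ℂ] ℂ where
  toFun M := M i j
  map_add' _ _ := rfl
  map_smul' _ _ := rfl

/-- The symmetric linear form `G_s = tr H^+_s + tr H^-_{p-s}`. -/
def GOf (p : ℕ)
    (ρP : (α : ℂ) → (s : ℕ) → (Uq p →ₐ[ℂ] Matrix (PIdx p s) (PIdx p s) ℂ))
    (s : ℕ) : Uq p →ₗ[ℂ] ℂ :=
  (∑ i : Fin s,
    (entry (Sum.inr (Sum.inr (Sum.inr i))) (Sum.inl i)).comp (ρP 1 s).toLinearMap) +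
  (∑ j : Fin (p - s),
    (entry (Sum.inr (Sum.inr (Sum.inr j))) (Sum.inl j)).comp (ρP (-1) (p - s)).toLinearMap)

/-! ### Convolution product -/

/-- The convolution product of two linear forms, with respect to a comultiplication `Δ`. -/
def conv (p : ℕ) (Δ : Uq p →ₐ[ℂ] (Uq p ⊗[ℂ] Uq p)) (φ ψ : Uq p →ₗ[ℂ] ℂ) :
    Uq p →ₗ[ℂ] ℂ :=
  (LinearMap.mul' ℂ ℂ).comp ((TensorProduct.map φ ψ).comp Δ.toLinearMap)

/-- The statement that `Δ` is the comultiplication of `Ū_q(sl₂)`. -/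
def IsCoprod (p : ℕ) (Δ : Uq p →ₐ[ℂ] (Uq p ⊗[ℂ] Uq p)) : Prop :=
  Δ (EE p) = 1 ⊗ₜ[ℂ] EE p + EE p ⊗ₜ[ℂ] KK p ∧
  Δ (FF p) = FF p ⊗ₜ[ℂ] 1 + KKinv p ⊗ₜ[ℂ] FF p ∧
  Δ (KK p) = KK p ⊗ₜ[ℂ] KK p ∧
  Δ (KKinv p) = KKinv p ⊗ₜ[ℂ] KKinv p


section basics
variable (p : ℕ)

lemma q_ne_zero : q p ≠ 0 := Complex.exp_ne_zero _

lemma q_prim (hp : 2 ≤ p) : IsPrimitiveRoot (q p) (2 * p) := by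
  have h := Complex.isPrimitiveRoot_exp (2 * p) (by omega)
  have e : q p = Complex.exp (2 * Real.pi * Complex.I / ((2 * p : ℕ) : ℂ)) := by
    unfold q
    congr 1
    have : (p : ℂ) ≠ 0 := by exact_mod_cast (by omega : p ≠ 0)
    push_cast
    field_simp
  rw [e]; exact h

lemma q_pow_p (hp : 2 ≤ p) : q p ^ p = -1 := by
  unfold q
  rw [← Complex.exp_nat_mul]
  have : (p : ℂ) ≠ 0 := by exact_mod_cast (by omega : p ≠ 0)
  rw [mul_div_cancel₀ _ this, Complex.exp_pi_mul_I]

lemma q_sq_pow_ne (hp : 2 ≤ p) (m : ℕ) (h0 : 0 < m) (h1 : m < p) : (q p ^ 2) ^ m ≠ 1 := by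
  rw [← pow_mul]
  exact (q_prim p hp).pow_ne_one_of_pos_of_lt (by omega) (by omega)

lemma q_sub_ne (hp : 2 ≤ p) : q p - (q p)⁻¹ ≠ 0 := by
  have h0 := q_ne_zero p
  have h := q_sq_pow_ne p hp 1 (by omega) (by omega)
  intro h'
  apply h
  field_simp at h'
  linear_combination h'

lemma qi_ne (hp : 2 ≤ p) (s : ℕ) (h0 : 0 < s) (h1 : s < p) : qi p s ≠ 0 := by
  have hq := q_ne_zero p
  have h := q_sq_pow_ne p hp s h0 h1
  unfold qi
  refine div_ne_zero ?_ (q_sub_ne p hp)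
  intro h'
  apply h
  rw [zpow_neg, zpow_natCast] at h'
  have : q p ^ s ≠ 0 := pow_ne_zero _ hq
  field_simp at h'
  rw [← pow_mul, mul_comm, pow_mul]
  linear_combination h'

/-- `κ = (q - q⁻¹)²` -/
def kap : ℂ := (q p - (q p)⁻¹) ^ 2

/-- normalised Casimir -/
def cas : Uq p := kap p • (FF p * EE p) + q p • KK p + (q p)⁻¹ • KKinv p

lemma rKKinv : KK p * KKinv p = 1 := by
  have := RingQuot.mkAlgHom_rel ℂ (rel.KKinv (p := p))
  simpa [KK, KKinv] using this
lemma rKinvK : KKinv p * KK p = 1 := by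
  have := RingQuot.mkAlgHom_rel ℂ (rel.KinvK (p := p))
  simpa [KK, KKinv] using this
lemma rEp : EE p ^ p = 0 := by
  have := RingQuot.mkAlgHom_rel ℂ (rel.Ep (p := p))
  simpa [EE] using this
lemma rFp : FF p ^ p = 0 := by
  have := RingQuot.mkAlgHom_rel ℂ (rel.Fp (p := p))
  simpa [FF] using this
lemma rK2p : KK p ^ (2 * p) = 1 := by
  have := RingQuot.mkAlgHom_rel ℂ (rel.K2p (p := p))
  simpa only [map_pow, map_one, KK] using this
lemma rKE : KK p * EE p = q p ^ 2 • (EE p * KK p) := by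
  have := RingQuot.mkAlgHom_rel ℂ (rel.KE (p := p))
  simpa only [map_mul, map_smul, KK, EE] using this
lemma rKF : KK p * FF p = (q p ^ 2)⁻¹ • (FF p * KK p) := by
  have := RingQuot.mkAlgHom_rel ℂ (rel.KF (p := p))
  simpa only [map_mul, map_smul, KK, FF] using this
lemma rEF : EE p * FF p = FF p * EE p + (q p - (q p)⁻¹)⁻¹ • (KK p - KKinv p) := by
  have := RingQuot.mkAlgHom_rel ℂ (rel.EF (p := p))
  rw [← sub_eq_iff_eq_add']
  simpa only [map_mul, map_sub, map_smul, KK, KKinv, EE, FF] using this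

lemma rEK : EE p * KK p = (q p ^ 2)⁻¹ • (KK p * EE p) := by
  have := pow_ne_zero 2 (q_ne_zero p)
  rw [rKE, smul_smul, inv_mul_cancel₀ this, one_smul]
lemma rFK : FF p * KK p = (q p ^ 2) • (KK p * FF p) := by
  have := pow_ne_zero 2 (q_ne_zero p)
  rw [rKF, smul_smul, mul_inv_cancel₀ this, one_smul]

lemma rEKinv : EE p * KKinv p = (q p ^ 2) • (KKinv p * EE p) := by
  calc EE p * KKinv p = KKinv p * (KK p * EE p) * KKinv p := by
        rw [← mul_assoc, rKinvK, one_mul]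
    _ = _ := by
        rw [rKE, mul_smul_comm, smul_mul_assoc, mul_assoc, mul_assoc, rKKinv, mul_one]
lemma rFKinv : FF p * KKinv p = (q p ^ 2)⁻¹ • (KKinv p * FF p) := by
  calc FF p * KKinv p = KKinv p * (KK p * FF p) * KKinv p := by
        rw [← mul_assoc, rKinvK, one_mul]
    _ = _ := by
        rw [rKF, mul_smul_comm, smul_mul_assoc, mul_assoc, mul_assoc, rKKinv, mul_one]

lemma rKinv_pow (hp : 2 ≤ p) : KKinv p = KK p ^ (2 * p - 1) := by
  have h : KK p ^ (2 * p - 1) * KK p = 1 := by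
    rw [← pow_succ, show 2 * p - 1 + 1 = 2 * p by omega, rK2p]
  calc KKinv p = KK p ^ (2 * p - 1) * KK p * KKinv p := by rw [h, one_mul]
    _ = _ := by rw [mul_assoc, rKKinv, mul_one]

lemma kFE : kap p • (FF p * EE p) = cas p - q p • KK p - (q p)⁻¹ • KKinv p := by
  unfold cas; abel

lemma kEF (hp : 2 ≤ p) : kap p • (EE p * FF p) = cas p - (q p)⁻¹ • KK p - q p • KKinv p := by
  have h := q_sub_ne p hp
  have hq := q_ne_zero p
  rw [rEF, smul_add, kFE, smul_smul, show kap p * (q p - (q p)⁻¹)⁻¹ = q p - (q p)⁻¹ by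
    unfold kap; rw [sq, mul_assoc, mul_inv_cancel₀ h, mul_one]]
  module

lemma kap_ne (hp : 2 ≤ p) : kap p ≠ 0 := pow_ne_zero _ (q_sub_ne p hp)

lemma casK : cas p * KK p = KK p * cas p := by
  have hq := q_ne_zero p
  have : FF p * EE p * KK p = KK p * (FF p * EE p) := by
    rw [mul_assoc, rEK, mul_smul_comm, ← mul_assoc, rFK, smul_mul_assoc, smul_smul,
      inv_mul_cancel₀ (pow_ne_zero 2 hq), one_smul, mul_assoc]
  simp only [cas, add_mul, mul_add, smul_mul_assoc, mul_smul_comm, this, rKKinv, rKinvK]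

lemma casE (hp : 2 ≤ p) : cas p * EE p = EE p * cas p := by
  have hq := q_ne_zero p
  have h1 : EE p * (kap p • (FF p * EE p)) = (kap p • (EE p * FF p)) * EE p := by
    rw [mul_smul_comm, smul_mul_assoc, mul_assoc]
  rw [kFE, kEF p hp] at h1
  simp only [mul_sub, sub_mul, smul_mul_assoc, mul_smul_comm, rEK, rEKinv, smul_smul] at h1
  have e1 : q p * (q p ^ 2)⁻¹ = (q p)⁻¹ := by field_simp
  have e2 : (q p)⁻¹ * q p ^ 2 = q p := by field_simp
  rw [e1, e2] at h1
  rw [sub_left_inj, sub_left_inj] at h1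
  exact h1.symm

lemma casF (hp : 2 ≤ p) : cas p * FF p = FF p * cas p := by
  have hq := q_ne_zero p
  have h1 : FF p * (kap p • (EE p * FF p)) = (kap p • (FF p * EE p)) * FF p := by
    rw [mul_smul_comm, smul_mul_assoc, mul_assoc]
  rw [kFE, kEF p hp] at h1
  simp only [mul_sub, sub_mul, smul_mul_assoc, mul_smul_comm, rFK, rFKinv, smul_smul] at h1
  have e1 : q p * (q p ^ 2)⁻¹ = (q p)⁻¹ := by field_simp
  have e2 : (q p)⁻¹ * q p ^ 2 = q p := by field_simp
  rw [e1, e2] at h1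
  rw [sub_left_inj, sub_left_inj] at h1
  exact h1.symm

lemma EmK (m l : ℕ) : ∃ t : ℂ, EE p ^ m * KK p ^ l = t • (KK p ^ l * EE p ^ m) := by
  have h1 : ∀ l : ℕ, ∃ t : ℂ, EE p * KK p ^ l = t • (KK p ^ l * EE p) := by
    intro l
    induction l with
    | zero => exact ⟨1, by simp⟩
    | succ l ih =>
      obtain ⟨t, ht⟩ := ih
      refine ⟨t * (q p ^ 2)⁻¹, ?_⟩
      rw [pow_succ, ← mul_assoc, ht, smul_mul_assoc, mul_assoc, rEK, mul_smul_comm, smul_smul,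
        mul_assoc]
  induction m with
  | zero => exact ⟨1, by simp⟩
  | succ m ih =>
    obtain ⟨t, ht⟩ := ih
    obtain ⟨t', ht'⟩ := h1 l
    refine ⟨t' * t, ?_⟩
    rw [pow_succ, mul_assoc, ht', mul_smul_comm, ← mul_assoc, ht, smul_mul_assoc, smul_smul,
      mul_assoc]

lemma FmK (m l : ℕ) : ∃ t : ℂ, FF p ^ m * KK p ^ l = t • (KK p ^ l * FF p ^ m) := by
  have h1 : ∀ l : ℕ, ∃ t : ℂ, FF p * KK p ^ l = t • (KK p ^ l * FF p) := by
    intro l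
    induction l with
    | zero => exact ⟨1, by simp⟩
    | succ l ih =>
      obtain ⟨t, ht⟩ := ih
      refine ⟨t * (q p ^ 2), ?_⟩
      rw [pow_succ, ← mul_assoc, ht, smul_mul_assoc, mul_assoc, rFK, mul_smul_comm, smul_smul,
        mul_assoc]
  induction m with
  | zero => exact ⟨1, by simp⟩
  | succ m ih =>
    obtain ⟨t, ht⟩ := ih
    obtain ⟨t', ht'⟩ := h1 l
    refine ⟨t' * t, ?_⟩
    rw [pow_succ, mul_assoc, ht', mul_smul_comm, ← mul_assoc, ht, smul_mul_assoc, smul_smul,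
      mul_assoc]

/-- the spanning set -/
def SS : Submodule ℂ (Uq p) :=
  Submodule.span ℂ {x | ∃ n j m : ℕ, x = cas p ^ n * KK p ^ j * EE p ^ m ∨
    x = cas p ^ n * KK p ^ j * FF p ^ m}

lemma memE (n j m : ℕ) : cas p ^ n * KK p ^ j * EE p ^ m ∈ SS p :=
  Submodule.subset_span ⟨n, j, m, Or.inl rfl⟩
lemma memF (n j m : ℕ) : cas p ^ n * KK p ^ j * FF p ^ m ∈ SS p :=
  Submodule.subset_span ⟨n, j, m, Or.inr rfl⟩

lemma memEK (n j m l : ℕ) : cas p ^ n * KK p ^ j * EE p ^ m * KK p ^ l ∈ SS p := by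
  obtain ⟨t, ht⟩ := EmK p m l
  rw [mul_assoc, ht, mul_smul_comm, ← mul_assoc, mul_assoc (cas p ^ n), ← pow_add]
  exact (SS p).smul_mem _ (memE p _ _ _)
lemma memFK (n j m l : ℕ) : cas p ^ n * KK p ^ j * FF p ^ m * KK p ^ l ∈ SS p := by
  obtain ⟨t, ht⟩ := FmK p m l
  rw [mul_assoc, ht, mul_smul_comm, ← mul_assoc, mul_assoc (cas p ^ n), ← pow_add]
  exact (SS p).smul_mem _ (memF p _ _ _)

lemma memEc (hp : 2 ≤ p) (n j m : ℕ) : cas p ^ n * KK p ^ j * EE p ^ m * cas p ∈ SS p := by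
  have h1 : Commute (cas p) (EE p ^ m) := (show Commute _ _ from casE p hp).pow_right m
  have h2 : Commute (cas p) (KK p ^ j) := (show Commute _ _ from casK p).pow_right j
  rw [mul_assoc, ← h1.eq, ← mul_assoc, mul_assoc (cas p ^ n), ← h2.eq, ← mul_assoc, ← pow_succ]
  exact memE p _ _ _
lemma memFc (hp : 2 ≤ p) (n j m : ℕ) : cas p ^ n * KK p ^ j * FF p ^ m * cas p ∈ SS p := by
  have h1 : Commute (cas p) (FF p ^ m) := (show Commute _ _ from casF p hp).pow_right m
  have h2 : Commute (cas p) (KK p ^ j) := (show Commute _ _ from casK p).pow_right j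
  rw [mul_assoc, ← h1.eq, ← mul_assoc, mul_assoc (cas p ^ n), ← h2.eq, ← mul_assoc, ← pow_succ]
  exact memF p _ _ _

lemma SS_mul (_hp : 2 ≤ p) (g : Uq p)
    (h : ∀ n j m : ℕ, cas p ^ n * KK p ^ j * EE p ^ m * g ∈ SS p ∧
      cas p ^ n * KK p ^ j * FF p ^ m * g ∈ SS p) : ∀ x ∈ SS p, x * g ∈ SS p := by
  intro x hx
  induction hx using Submodule.span_induction with
  | mem x hx =>
    obtain ⟨n, j, m, rfl | rfl⟩ := hx
    · exact (h n j m).1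
    · exact (h n j m).2
  | zero => simp
  | add x y _ _ hx hy => rw [add_mul]; exact (SS p).add_mem hx hy
  | smul a x _ hx => rw [smul_mul_assoc]; exact (SS p).smul_mem _ hx

lemma SS_K (hp : 2 ≤ p) : ∀ x ∈ SS p, x * KK p ∈ SS p :=
  SS_mul p hp _ fun n j m => by
    have := memEK p n j m 1
    have := memFK p n j m 1
    simp_all

lemma SS_E (hp : 2 ≤ p) : ∀ x ∈ SS p, x * EE p ∈ SS p :=
  SS_mul p hp _ fun n j m => by
    constructor
    · rw [mul_assoc, ← pow_succ]; exact memE p _ _ _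
    · cases m with
      | zero => simpa using memE p n j 1
      | succ m =>
        have e : FF p * EE p = (kap p)⁻¹ • (cas p - q p • KK p - (q p)⁻¹ • KKinv p) := by
          rw [← kFE, smul_smul, inv_mul_cancel₀ (kap_ne p hp), one_smul]
        rw [pow_succ, mul_assoc, mul_assoc (FF p ^ m), e, rKinv_pow p hp, ← mul_assoc,
          mul_smul_comm, mul_sub, mul_sub, mul_smul_comm, mul_smul_comm]
        refine (SS p).smul_mem _ ((SS p).sub_mem ((SS p).sub_mem (memFc p hp _ _ _)
          ((SS p).smul_mem _ ?_)) ((SS p).smul_mem _ (memFK p _ _ _ _)))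
        simpa using memFK p n j m 1

lemma SS_F (hp : 2 ≤ p) : ∀ x ∈ SS p, x * FF p ∈ SS p :=
  SS_mul p hp _ fun n j m => by
    constructor
    · cases m with
      | zero => simpa using memF p n j 1
      | succ m =>
        have e : EE p * FF p = (kap p)⁻¹ • (cas p - (q p)⁻¹ • KK p - q p • KKinv p) := by
          rw [← kEF p hp, smul_smul, inv_mul_cancel₀ (kap_ne p hp), one_smul]
        rw [pow_succ, mul_assoc, mul_assoc (EE p ^ m), e, rKinv_pow p hp, ← mul_assoc,
          mul_smul_comm, mul_sub, mul_sub, mul_smul_comm, mul_smul_comm]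
        refine (SS p).smul_mem _ ((SS p).sub_mem ((SS p).sub_mem (memEc p hp _ _ _)
          ((SS p).smul_mem _ ?_)) ((SS p).smul_mem _ (memEK p _ _ _ _)))
        simpa using memEK p n j m 1
    · rw [mul_assoc, ← pow_succ]; exact memF p _ _ _

lemma SS_Kinv (hp : 2 ≤ p) : ∀ x ∈ SS p, x * KKinv p ∈ SS p := by
  rw [rKinv_pow p hp]
  exact SS_mul p hp _ fun n j m => ⟨memEK p _ _ _ _, memFK p _ _ _ _⟩

lemma SS_top (hp : 2 ≤ p) (u : Uq p) : u ∈ SS p := by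
  obtain ⟨w, rfl⟩ := RingQuot.mkAlgHom_surjective ℂ (rel p) u
  have key : ∀ x ∈ SS p, x * RingQuot.mkAlgHom ℂ (rel p) w ∈ SS p := by
    induction w using FreeAlgebra.induction with
    | grade0 r =>
      intro x hx
      rw [AlgHom.commutes, ← Algebra.commutes, ← Algebra.smul_def]
      exact (SS p).smul_mem _ hx
    | grade1 g =>
      cases g with
      | E => exact SS_E p hp
      | F => exact SS_F p hp
      | K => exact SS_K p hp
      | Kinv => exact SS_Kinv p hp
    | mul a b ha hb => intro x hx; rw [map_mul, ← mul_assoc]; exact hb _ (ha _ hx)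
    | add a b ha hb => intro x hx; rw [map_add, mul_add]; exact (SS p).add_mem (ha _ hx) (hb _ hx)
  have h1 : (1 : Uq p) ∈ SS p := by simpa using memE p 0 0 0
  simpa using key 1 h1

/-- Conjugation of `E^m`. -/
lemma KEm (m : ℕ) : KK p * EE p ^ m = (q p ^ 2) ^ m • (EE p ^ m * KK p) := by
  induction m with
  | zero => simp
  | succ m ih =>
    rw [pow_succ, ← mul_assoc, ih, smul_mul_assoc, mul_assoc, rKE, mul_smul_comm, smul_smul,
      ← pow_succ, mul_assoc]
lemma KFm (m : ℕ) : KK p * FF p ^ m = ((q p ^ 2)⁻¹) ^ m • (FF p ^ m * KK p) := by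
  induction m with
  | zero => simp
  | succ m ih =>
    rw [pow_succ, ← mul_assoc, ih, smul_mul_assoc, mul_assoc, rKF, mul_smul_comm, smul_smul,
      ← pow_succ, mul_assoc]

lemma ext_form (hp : 2 ≤ p) (φ : Uq p →ₗ[ℂ] ℂ)
    (hK : ∀ x, φ (KK p * x * KKinv p) = φ x)
    (h : ∀ n j : ℕ, φ (cas p ^ n * KK p ^ j) = 0) : φ = 0 := by
  have aux : ∀ (x : Uq p) (t : ℂ), t ≠ 1 → KK p * x = t • (x * KK p) → φ x = 0 := by
    intro x t ht hx
    have := hK x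
    rw [hx, smul_mul_assoc, mul_assoc, rKKinv, mul_one, map_smul, smul_eq_mul] at this
    have h2 : (t - 1) * φ x = 0 := by linear_combination this
    rcases mul_eq_zero.mp h2 with h3 | h3
    · exact absurd (sub_eq_zero.mp h3) ht
    · exact h3
  have comm : ∀ n j : ℕ, KK p * (cas p ^ n * KK p ^ j) = cas p ^ n * KK p ^ j * KK p := by
    intro n j
    have h1 : Commute (KK p) (cas p ^ n) := (show Commute _ _ from (casK p).symm).pow_right n
    rw [← mul_assoc, h1.eq, mul_assoc, mul_assoc, ← pow_succ, ← pow_succ']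
  ext u
  have hu := SS_top p hp u
  induction hu using Submodule.span_induction with
  | zero => simp
  | add x y _ _ hx hy => simp [hx, hy]
  | smul a x _ hx => simp [hx]
  | mem x hx =>
    simp only [LinearMap.zero_apply]
    obtain ⟨n, j, m, rfl | rfl⟩ := hx
    · rcases Nat.eq_zero_or_pos m with rfl | hm
      · simpa using h n j
      rcases lt_or_ge m p with hm' | hm'
      · refine aux _ ((q p ^ 2) ^ m) (q_sq_pow_ne p hp m hm hm') ?_
        rw [← mul_assoc, comm, mul_assoc, KEm, mul_smul_comm, mul_assoc (_ * _)]
      · rw [show m = p + (m - p) by omega, pow_add, rEp]; simp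
    · rcases Nat.eq_zero_or_pos m with rfl | hm
      · simpa using h n j
      rcases lt_or_ge m p with hm' | hm'
      · refine aux _ (((q p ^ 2)⁻¹) ^ m) ?_ ?_
        · rw [inv_pow]
          intro h'
          exact q_sq_pow_ne p hp m hm hm' (inv_eq_one.mp h')
        rw [← mul_assoc, comm, mul_assoc, KFm, mul_smul_comm, mul_assoc (_ * _)]
      · rw [show m = p + (m - p) by omega, pow_add, rFp]; simp

end basics
open scoped Matrix

section proj
variable (p : ℕ)

/-- Casimir eigenvalue. -/
def ev (α : ℂ) (s : ℤ) : ℂ := α * (q p ^ s + q p ^ (-s))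

variable {p} {α : ℂ} {s : ℕ} (R : Uq p →ₐ[ℂ] Matrix (PIdx p s) (PIdx p s) ℂ)

/-- basis vectors -/
def bv (i : PIdx p s) : PIdx p s → ℂ := Pi.single i 1

lemma K_bv (hK : R (KK p) = PK p α s) (i : PIdx p s) :
    R (KK p) *ᵥ bv i = PKdiag p α s i • bv i := by
  rw [hK, PK, bv, Matrix.mulVec_single_one]
  ext k
  by_cases h : k = i
  · subst h; simp
  · simp [h]

lemma PKdiag_ne (hα : α ≠ 0) (i : PIdx p s) : PKdiag p α s i ≠ 0 := by
  have hq := q_ne_zero p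
  rcases i with i | i | i | i <;> simp only [PKdiag] <;>
    exact mul_ne_zero (by simpa using hα) (zpow_ne_zero _ hq)

lemma Kinv_bv (hα : α ≠ 0) (hK : R (KK p) = PK p α s) (i : PIdx p s) :
    R (KKinv p) *ᵥ bv i = (PKdiag p α s i)⁻¹ • bv i := by
  have h : R (KKinv p) *ᵥ (R (KK p) *ᵥ bv i) = bv i := by
    rw [Matrix.mulVec_mulVec, ← map_mul, rKinvK, map_one, Matrix.one_mulVec]
  rw [K_bv R hK, Matrix.mulVec_smul] at h
  rw [← h, smul_smul, h, inv_mul_cancel₀ (PKdiag_ne hα i), one_smul]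

lemma E_b0 (hE : R (EE p) = PE p α s) (h0 : 0 < s) (h1 : s < p) :
    R (EE p) *ᵥ bv (.inl ⟨0, h0⟩) = bv (.inr (.inl ⟨p - s - 1, by omega⟩)) := by
  rw [hE, bv, bv, Matrix.mulVec_single_one]
  ext k
  rcases k with k | k | k | k
  · simp [PE]
  · have : (k : ℕ) + 1 = p - s ↔ k = ⟨p - s - 1, by omega⟩ := by
      rw [Fin.ext_iff]; simp only; omega
    simp [PE, this, Pi.single_apply]
  · simp [PE]
  · simp [PE]

lemma E_bS (hE : R (EE p) = PE p α s) (i : ℕ) (h0 : i + 1 < s) :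
    R (EE p) *ᵥ bv (.inl ⟨i + 1, h0⟩) =
      (α * qi p (i + 1) * qi p (s - (i + 1))) • bv (.inl ⟨i, by omega⟩)
       + bv (.inr (.inr (.inr ⟨i, by omega⟩))) := by
  rw [hE, bv, bv, Matrix.mulVec_single_one]
  ext k
  rcases k with k | k | k | k
  · simp [PE, bv, Pi.single_apply, Fin.ext_iff]
  · simp [PE, bv]
  · simp [PE, bv]
  · simp [PE, bv, Pi.single_apply, Fin.ext_iff]

lemma E_a0 (hE : R (EE p) = PE p α s) (h0 : 0 < s) :
    R (EE p) *ᵥ bv (.inr (.inr (.inr ⟨0, h0⟩))) = 0 := by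
  rw [hE, bv, Matrix.mulVec_single_one]
  ext k
  rcases k with k | k | k | k <;> simp [PE]

lemma E_aS (hE : R (EE p) = PE p α s) (i : ℕ) (h0 : i + 1 < s) :
    R (EE p) *ᵥ bv (.inr (.inr (.inr ⟨i + 1, h0⟩))) =
      (α * qi p (i + 1) * qi p (s - (i + 1))) • bv (.inr (.inr (.inr ⟨i, by omega⟩))) := by
  rw [hE, bv, bv, Matrix.mulVec_single_one]
  ext k
  rcases k with k | k | k | k <;> simp [PE, Pi.single_apply, Fin.ext_iff]

lemma F_b (hF : R (FF p) = PF p s) (i : ℕ) (h0 : i + 1 < s) :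
    R (FF p) *ᵥ bv (.inl ⟨i, by omega⟩) = bv (.inl ⟨i + 1, h0⟩) := by
  rw [hF, bv, bv, Matrix.mulVec_single_one]
  have : ¬ (i + 1 = s) := by omega
  ext k
  rcases k with k | k | k | k <;> simp [PF, Pi.single_apply, Fin.ext_iff, this]

lemma F_a (hF : R (FF p) = PF p s) (i : ℕ) (h0 : i + 1 < s) :
    R (FF p) *ᵥ bv (.inr (.inr (.inr ⟨i, by omega⟩))) = bv (.inr (.inr (.inr ⟨i + 1, h0⟩))) := by
  rw [hF, bv, bv, Matrix.mulVec_single_one]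
  ext k
  rcases k with k | k | k | k <;> simp [PF, Pi.single_apply, Fin.ext_iff]

lemma F_x (hF : R (FF p) = PF p s) (h0 : 0 < s) (h1 : s < p) :
    R (FF p) *ᵥ bv (.inr (.inl ⟨p - s - 1, by omega⟩)) = bv (.inr (.inr (.inr ⟨0, h0⟩))) := by
  rw [hF, bv, bv, Matrix.mulVec_single_one]
  have h2 : p - s - 1 + 1 = p - s := by omega
  ext k
  rcases k with k | k | k | k
  · simp [PF]
  · have := k.2
    have h3 : ¬ ((k : ℕ) = p - s) := by omega
    simp [PF, h2, h3]
  · simp [PF]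
  · simp [PF, Pi.single_apply, Fin.ext_iff, h2]

lemma cas_mulVec (v : PIdx p s → ℂ) : R (cas p) *ᵥ v =
    kap p • (R (FF p) *ᵥ (R (EE p) *ᵥ v)) + q p • (R (KK p) *ᵥ v)
      + (q p)⁻¹ • (R (KKinv p) *ᵥ v) := by
  simp only [cas, map_add, map_smul, map_mul, Matrix.add_mulVec, Matrix.smul_mulVec,
    Matrix.mulVec_mulVec]

lemma ev_id (hp : 2 ≤ p) (hα : α = 1 ∨ α = -1) (s i : ℤ) :
    kap p * (α * qi p i * qi p (s - i)) + q p * (α * q p ^ (s - 1 - 2 * i))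
      + (q p)⁻¹ * (α * q p ^ (s - 1 - 2 * i))⁻¹ = ev p α s := by
  have hq := q_ne_zero p
  have h := q_sub_ne p hp
  have hαi : α⁻¹ = α := by rcases hα with rfl | rfl <;> norm_num
  rw [mul_inv, hαi]
  have : kap p * (α * qi p i * qi p (s - i)) =
      α * ((q p ^ i - q p ^ (-i)) * (q p ^ (s - i) - q p ^ (-(s - i)))) := by
    unfold kap qi
    generalize q p - (q p)⁻¹ = z at h
    field_simp
  rw [this, ev]
  have e1 : q p ^ (s - i) = q p ^ s * (q p ^ i)⁻¹ := by rw [zpow_sub₀ hq]; rfl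
  have e2 : q p ^ (s - 1 - 2 * i) = q p ^ s * (q p)⁻¹ * ((q p ^ i)⁻¹) ^ 2 := by
    rw [zpow_sub₀ hq, zpow_sub₀ hq, mul_comm 2 i, zpow_mul]
    simp [div_eq_mul_inv]
  have h1 := zpow_ne_zero i hq
  have h2 := zpow_ne_zero s hq
  rw [zpow_neg, zpow_neg, zpow_neg, e1, e2]
  field_simp
  ring

lemma cas_b (hp : 2 ≤ p) (hα : α = 1 ∨ α = -1) (h1 : s < p)
    (hK : R (KK p) = PK p α s) (hE : R (EE p) = PE p α s) (hF : R (FF p) = PF p s) (i : Fin s) :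
    R (cas p) *ᵥ bv (.inl i) = ev p α s • bv (.inl i) + kap p • bv (.inr (.inr (.inr i))) := by
  have hα0 : α ≠ 0 := by rcases hα with rfl | rfl <;> norm_num
  rw [cas_mulVec, K_bv R hK, Kinv_bv R hα0 hK]
  obtain ⟨i, hi⟩ := i
  have := ev_id hp hα s i
  rcases i with _ | i
  · rw [E_b0 R hE hi h1, F_x R hF hi h1, ← this]
    have z : qi p 0 = 0 := by simp [qi]
    simp [PKdiag, z]
    module
  · rw [E_bS R hE, Matrix.mulVec_add, Matrix.mulVec_smul, F_b R hF i hi, F_a R hF i hi, ← this]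
    simp only [PKdiag]
    push_cast
    module

lemma cas_a (hp : 2 ≤ p) (hα : α = 1 ∨ α = -1)
    (hK : R (KK p) = PK p α s) (hE : R (EE p) = PE p α s) (hF : R (FF p) = PF p s) (i : Fin s) :
    R (cas p) *ᵥ bv (.inr (.inr (.inr i))) = ev p α s • bv (.inr (.inr (.inr i))) := by
  have hα0 : α ≠ 0 := by rcases hα with rfl | rfl <;> norm_num
  rw [cas_mulVec, K_bv R hK, Kinv_bv R hα0 hK]
  obtain ⟨i, hi⟩ := i
  have := ev_id hp hα s i
  rcases i with _ | i
  · rw [E_a0 R hE hi, ← this]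
    have z : qi p 0 = 0 := by simp [qi]
    simp [PKdiag, z]
    module
  · rw [E_aS R hE, Matrix.mulVec_smul, F_a R hF i hi, ← this]
    simp only [PKdiag]
    push_cast
    module

open Polynomial in
lemma poly_b (hp : 2 ≤ p) (hα : α = 1 ∨ α = -1) (h1 : s < p)
    (hK : R (KK p) = PK p α s) (hE : R (EE p) = PE p α s) (hF : R (FF p) = PF p s) (i : Fin s)
    (f : ℂ[X]) :
    R (aeval (cas p) f) *ᵥ bv (.inl i) = f.eval (ev p α s) • bv (.inl i) +
      (kap p * f.derivative.eval (ev p α s)) • bv (.inr (.inr (.inr i))) := by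
  induction f using Polynomial.induction_on' with
  | add f g hf hg =>
    simp only [map_add, Matrix.add_mulVec, hf, hg, eval_add]
    module
  | monomial n a =>
    rw [← C_mul_X_pow_eq_monomial]
    induction n with
    | zero => simp [Algebra.algebraMap_eq_smul_one, Matrix.smul_mulVec]
    | succ n ih =>
      rw [pow_succ', mul_left_comm, map_mul, map_mul, ← Matrix.mulVec_mulVec, ih, aeval_X,
        Matrix.mulVec_add, Matrix.mulVec_smul, Matrix.mulVec_smul, cas_b R hp hα h1 hK hE hF,
        cas_a R hp hα hK hE hF, derivative_mul (f := X)]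
      simp only [eval_mul, eval_add, eval_X, derivative_X, eval_one]
      module

open Polynomial in
lemma entry_eval (hp : 2 ≤ p) (hα : α = 1 ∨ α = -1) (h1 : s < p)
    (hK : R (KK p) = PK p α s) (hE : R (EE p) = PE p α s) (hF : R (FF p) = PF p s) (i : Fin s)
    (f : ℂ[X]) (j : ℕ) :
    R (aeval (cas p) f * KK p ^ j) (.inr (.inr (.inr i))) (.inl i) =
      kap p * f.derivative.eval (ev p α s) * (α * q p ^ ((s : ℤ) - 1 - 2 * (i : ℕ))) ^ j := by
  have hKj : R (KK p ^ j) *ᵥ bv (.inl i) = (PKdiag p α s (.inl i)) ^ j • bv (.inl i) := by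
    induction j with
    | zero => simp
    | succ j ih =>
      rw [pow_succ, map_mul, ← Matrix.mulVec_mulVec, K_bv R hK, Matrix.mulVec_smul, ih, smul_smul,
        pow_succ']
  have : R (aeval (cas p) f * KK p ^ j) (.inr (.inr (.inr i))) (.inl i) =
      (R (aeval (cas p) f * KK p ^ j) *ᵥ bv (.inl i)) (.inr (.inr (.inr i))) := by
    rw [bv, Matrix.mulVec_single_one]; rfl
  rw [this, map_mul, ← Matrix.mulVec_mulVec, hKj, Matrix.mulVec_smul, poly_b R hp hα h1 hK hE hF]
  simp [bv, PKdiag]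
  ring

lemma entry_conj (hα : α ≠ 0) (hK : R (KK p) = PK p α s) (i : Fin s) (x : Uq p) :
    R (KK p * x * KKinv p) (.inr (.inr (.inr i))) (.inl i)
      = R x (.inr (.inr (.inr i))) (.inl i) := by
  have e : ∀ y : Uq p, R y (.inr (.inr (.inr i))) (.inl i) =
      (R y *ᵥ bv (.inl i)) (.inr (.inr (.inr i))) := by
    intro y; rw [bv, Matrix.mulVec_single_one]; rfl
  rw [e, map_mul, ← Matrix.mulVec_mulVec, Kinv_bv R hα hK, Matrix.mulVec_smul, map_mul,
    ← Matrix.mulVec_mulVec, hK, PK, Pi.smul_apply, Matrix.mulVec_diagonal, ← e]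
  have h0 := PKdiag_ne hα (p := p) (s := s) (.inl i)
  have : PKdiag p α s (.inr (.inr (.inr i))) = PKdiag p α s (.inl i) := rfl
  rw [this, smul_eq_mul, ← mul_assoc, inv_mul_cancel₀ h0, one_mul]
end proj

section GG
variable {p : ℕ} (ρP : (α : ℂ) → (s : ℕ) → (Uq p →ₐ[ℂ] Matrix (PIdx p s) (PIdx p s) ℂ))

lemma GOf_conj (hP : IsPRep p ρP) (s : ℕ) (h0 : 0 < s) (h1 : s < p) (x : Uq p) :
    GOf p ρP s (KK p * x * KKinv p) = GOf p ρP s x := by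
  have hK1 := (hP 1 (Or.inl rfl) s (by omega) (by omega)).1
  have hK2 := (hP (-1) (Or.inr rfl) (p - s) (by omega) (by omega)).1
  simp only [GOf, LinearMap.add_apply, LinearMap.coe_sum, Finset.sum_apply, LinearMap.comp_apply,
    AlgHom.toLinearMap_apply]
  congr 1
  · exact Finset.sum_congr rfl fun i _ => entry_conj _ one_ne_zero hK1 i x
  · exact Finset.sum_congr rfl fun i _ => entry_conj _ (by norm_num) hK2 i x

/-- `∑_{i<p} q^{-2ij}` -/
def Wj (p j : ℕ) : ℂ := ∑ i ∈ Finset.range p, ((((q p) ^ 2)⁻¹) ^ j) ^ i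

lemma Wj_id (hp : 2 ≤ p) (j : ℕ) : (q p ^ 2) ^ j * Wj p j = Wj p j := by
  have hq := q_ne_zero p
  have h : Wj p j * ((((q p) ^ 2)⁻¹) ^ j - 1) = 0 := by
    rw [Wj, geom_sum_mul, ← pow_mul, mul_comm j p, pow_mul, inv_pow, ← pow_mul, mul_comm 2 p,
      pow_mul, q_pow_p p hp]
    norm_num
  have h2 : (q p ^ 2) ^ j ≠ 0 := pow_ne_zero _ (pow_ne_zero _ hq)
  rw [inv_pow] at h
  field_simp at h
  linear_combination -h

lemma ev_neg (hp : 2 ≤ p) (s : ℕ) (h1 : s < p) : ev p (-1) ((p - s : ℕ) : ℤ) = ev p 1 s := by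
  have hq := q_ne_zero p
  have hpp := q_pow_p p hp
  rw [Nat.cast_sub h1.le]
  simp only [ev]
  rw [neg_sub, zpow_sub₀ hq, zpow_sub₀ hq, zpow_natCast, hpp, zpow_neg, zpow_natCast]
  field_simp
  ring

open Polynomial in
lemma GOf_eval (hp : 2 ≤ p) (hP : IsPRep p ρP) (s : ℕ) (h0 : 0 < s) (h1 : s < p)
    (f : ℂ[X]) (j : ℕ) :
    GOf p ρP s (aeval (cas p) f * KK p ^ j) =
      kap p * f.derivative.eval (ev p 1 s) * ((q p ^ ((s : ℤ) - 1)) ^ j * Wj p j) := by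
  have hq := q_ne_zero p
  obtain ⟨a1, a2, a3⟩ := (hP 1 (Or.inl rfl) s (by omega) (by omega))
  obtain ⟨b1, b2, b3⟩ := (hP (-1) (Or.inr rfl) (p - s) (by omega) (by omega))
  simp only [GOf, LinearMap.add_apply, LinearMap.coe_sum, Finset.sum_apply, LinearMap.comp_apply,
    AlgHom.toLinearMap_apply]
  have e1 : ∀ i : Fin s, entry (.inr (.inr (.inr i))) (.inl i)
      (ρP 1 s (aeval (cas p) f * KK p ^ j)) =
      kap p * f.derivative.eval (ev p 1 s) * ((q p ^ ((s : ℤ) - 1)) ^ j *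
        ((((q p) ^ 2)⁻¹) ^ j) ^ (i : ℕ)) := by
    intro i
    refine (entry_eval (ρP 1 s) hp (Or.inl rfl) h1 a1 a2 a3 i f j).trans ?_
    congr 1
    rw [one_mul, ← pow_mul, mul_comm j, pow_mul, ← mul_pow, zpow_sub₀ hq, zpow_mul,
      div_eq_mul_inv]
    congr 2
    simp
  have e2 : ∀ i : Fin (p - s), entry (.inr (.inr (.inr i))) (.inl i)
      (ρP (-1) (p - s) (aeval (cas p) f * KK p ^ j)) =
      kap p * f.derivative.eval (ev p 1 s) * ((q p ^ ((s : ℤ) - 1)) ^ j *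
        ((((q p) ^ 2)⁻¹) ^ j) ^ (s + (i : ℕ))) := by
    intro i
    refine (entry_eval (ρP (-1) (p - s)) hp (Or.inr rfl) (by omega) b1 b2 b3 i f j).trans ?_
    rw [ev_neg hp s h1]
    congr 1
    rw [← pow_mul, mul_comm j, pow_mul, ← mul_pow, Nat.cast_sub h1.le,
      show (p : ℤ) - s - 1 - 2 * (i : ℕ) = p + (s - 1) - 2 * ((s + i : ℕ) : ℤ) by push_cast; ring,
      zpow_sub₀ hq, zpow_add₀ hq, zpow_mul, zpow_natCast, q_pow_p p hp,
      div_eq_mul_inv]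
    congr 1
    rw [zpow_natCast, ← inv_pow]
    have : q p ^ (2 : ℤ) = q p ^ 2 := by norm_cast
    rw [this]
    ring
  simp only [e1, e2]
  rw [← Finset.mul_sum, ← Finset.mul_sum, ← Finset.mul_sum, ← Finset.mul_sum, ← mul_add, ← mul_add]
  congr 2
  rw [Finset.sum_fin_eq_sum_range, Finset.sum_fin_eq_sum_range]
  have := Finset.sum_range_add (fun i => ((((q p) ^ 2)⁻¹) ^ j) ^ i) s (p - s)
  rw [show s + (p - s) = p by omega] at this
  rw [Wj, this]
  congr 1
  · exact Finset.sum_congr rfl fun i hi => by simp [Finset.mem_range.mp hi]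
  · exact Finset.sum_congr rfl fun i hi => by simp [Finset.mem_range.mp hi]
end GG
section Del
variable {p : ℕ} (ρ : Uq p →ₐ[ℂ] Matrix (Fin 2) (Fin 2) ℂ) (Δ : Uq p →ₐ[ℂ] (Uq p ⊗[ℂ] Uq p))

/-- `(ρ ⊗ id)` -/
def rid : (Uq p ⊗[ℂ] Uq p) →ₐ[ℂ] Matrix (Fin 2) (Fin 2) (Uq p) :=
  Algebra.TensorProduct.lift ((Algebra.ofId ℂ (Uq p)).mapMatrix.comp ρ)
    (Matrix.scalarAlgHom (Fin 2) ℂ) (by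
      intro x y
      ext i j
      simp [Matrix.scalar_apply, Algebra.ofId_apply, Algebra.commutes])

lemma rid_tmul (x y : Uq p) (i j : Fin 2) : rid ρ (x ⊗ₜ y) i j = ρ x i j • y := by
  rw [rid]
  erw [Algebra.TensorProduct.lift_tmul]
  simp [Matrix.scalar_apply, Algebra.ofId_apply, Algebra.smul_def]

lemma conv_apply (φ : Uq p →ₗ[ℂ] ℂ) (u : Uq p) :
    conv p Δ (chiOf p ρ) φ u = φ (rid ρ (Δ u) 0 0) + φ (rid ρ (Δ u) 1 1) := by
  simp only [conv, LinearMap.comp_apply, AlgHom.toLinearMap_apply]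
  induction Δ u using TensorProduct.induction_on with
  | zero => simp
  | tmul x y =>
    rw [rid_tmul, rid_tmul]
    simp [chiOf, Matrix.trace_fin_two, add_mul]
  | add x y hx hy =>
    simp only [map_add, hx, hy, Matrix.add_apply]; ring

/-- `δ` -/
def del : Uq p →ₐ[ℂ] Matrix (Fin 2) (Fin 2) (Uq p) := (rid ρ).comp Δ

lemma del_K (hK : ρ (KK p) = XK p 1 2) (hΔ : IsCoprod p Δ) :
    del ρ Δ (KK p) = !![q p • KK p, 0; 0, (q p)⁻¹ • KK p] := by
  simp only [del, AlgHom.comp_apply, hΔ.2.2.1]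
  ext i j
  rw [rid_tmul, hK]
  fin_cases i <;> fin_cases j <;> simp [XK]

lemma rho_Kinv (hK : ρ (KK p) = XK p 1 2) : ρ (KKinv p) = !![(q p)⁻¹, 0; 0, q p] := by
  have hq := q_ne_zero p
  have h1 : ρ (KK p) * !![(q p)⁻¹, 0; 0, q p] = 1 := by
    rw [hK]
    ext i j
    fin_cases i <;> fin_cases j <;> simp [XK, Matrix.mul_apply, hq]
  calc ρ (KKinv p) = ρ (KKinv p) * (ρ (KK p) * !![(q p)⁻¹, 0; 0, q p]) := by rw [h1, mul_one]
    _ = _ := by rw [← mul_assoc, ← map_mul, rKinvK, map_one, one_mul]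

lemma del_Kinv (hK : ρ (KK p) = XK p 1 2) (hΔ : IsCoprod p Δ) :
    del ρ Δ (KKinv p) = !![(q p)⁻¹ • KKinv p, 0; 0, q p • KKinv p] := by
  simp only [del, AlgHom.comp_apply, hΔ.2.2.2]
  ext i j
  rw [rid_tmul, rho_Kinv ρ hK]
  fin_cases i <;> fin_cases j <;> simp

lemma del_E (hp : 2 ≤ p) (hE : ρ (EE p) = XE p 1 2) (hΔ : IsCoprod p Δ) :
    del ρ Δ (EE p) = !![EE p, KK p; 0, EE p] := by
  have h1 : qi p 1 = 1 := by simp [qi, q_sub_ne p hp]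
  simp only [del, AlgHom.comp_apply, hΔ.1, map_add]
  ext i j
  rw [Matrix.add_apply, rid_tmul, rid_tmul, hE]
  fin_cases i <;> fin_cases j <;> simp [XE, h1]

lemma del_F (hK : ρ (KK p) = XK p 1 2) (hF : ρ (FF p) = XF 2) (hΔ : IsCoprod p Δ) :
    del ρ Δ (FF p) = !![(q p)⁻¹ • FF p, 0; 1, q p • FF p] := by
  simp only [del, AlgHom.comp_apply, hΔ.2.1, map_add]
  ext i j
  rw [Matrix.add_apply, rid_tmul, rid_tmul, hF, rho_Kinv ρ hK]
  fin_cases i <;> fin_cases j <;> simp [XF]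

lemma del_cas (hp : 2 ≤ p) (hK : ρ (KK p) = XK p 1 2) (hE : ρ (EE p) = XE p 1 2)
    (hF : ρ (FF p) = XF 2) (hΔ : IsCoprod p Δ) :
    del ρ Δ (cas p) = !![(q p)⁻¹ • cas p + (q p ^ 2 - 1) • KK p, (kap p * (q p)⁻¹) • (FF p * KK p);
      kap p • EE p, q p • cas p + (((q p) ^ 2)⁻¹ - 1) • KK p] := by
  have hq := q_ne_zero p
  conv_lhs => rw [cas]
  rw [map_add, map_add, map_smul, map_smul, map_smul, map_mul, del_K ρ Δ hK hΔ, del_Kinv ρ Δ hK hΔ,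
    del_E ρ Δ hp hE hΔ, del_F ρ Δ hK hF hΔ]
  ext i j
  fin_cases i <;> fin_cases j <;> simp [cas, smul_smul]
  · match_scalars <;> field_simp
    ring
  · match_scalars <;> (try unfold kap) <;> field_simp
    ring

lemma del_quad (hp : 2 ≤ p) (hK : ρ (KK p) = XK p 1 2) (hE : ρ (EE p) = XE p 1 2)
    (hF : ρ (FF p) = XF 2) (hΔ : IsCoprod p Δ) :
    del ρ Δ (cas p) * del ρ Δ (cas p) =
      Matrix.scalar (Fin 2) (-(cas p ^ 2 + algebraMap ℂ _ (kap p))) +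
      Matrix.scalar (Fin 2) ((q p + (q p)⁻¹) • cas p) * del ρ Δ (cas p) := by
  have hq := q_ne_zero p
  have hk := kap_ne p hp
  have c1 := casK p
  have c2 := casE p hp
  have c3 := casF p hp
  have fe : FF p * EE p = (kap p)⁻¹ • (cas p - q p • KK p - (q p)⁻¹ • KKinv p) := by
    rw [← kFE, smul_smul, inv_mul_cancel₀ (kap_ne p hp), one_smul]
  have ef : EE p * FF p = (kap p)⁻¹ • (cas p - (q p)⁻¹ • KK p - q p • KKinv p) := by
    rw [← kEF p hp, smul_smul, inv_mul_cancel₀ (kap_ne p hp), one_smul]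
  have c4 := rKE p
  have c5 := rFK p
  have hd : (q p ^ 2 - 1) ≠ 0 := by
    have := q_sq_pow_ne p hp 1 (by omega) (by omega)
    rw [pow_one] at this
    exact sub_ne_zero.mpr this
  have hkk : kap p = (q p ^ 2 - 1) ^ 2 / q p ^ 2 := by
    unfold kap; field_simp
  have fke : FF p * (KK p * EE p) = (q p ^ 2 * (kap p)⁻¹) •
      (KK p * cas p - q p • (KK p * KK p) - (q p)⁻¹ • 1) := by
    rw [c4, mul_smul_comm, ← mul_assoc, fe]
    simp only [smul_mul_assoc, sub_mul, smul_smul, rKinvK, c1]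
  have efk : EE p * (FF p * KK p) = ((kap p)⁻¹) •
      (KK p * cas p - (q p)⁻¹ • (KK p * KK p) - q p • 1) := by
    rw [← mul_assoc, ef]
    simp only [smul_mul_assoc, sub_mul, rKinvK, c1]
  have kfk : KK p * (FF p * KK p) = (q p ^ 2)⁻¹ • (FF p * (KK p * KK p)) := by
    rw [← mul_assoc, rKF, smul_mul_assoc, mul_assoc]
  have cfk : cas p * (FF p * KK p) = FF p * (KK p * cas p) := by
    rw [← mul_assoc, c3, mul_assoc, c1]
  rw [del_cas ρ Δ hp hK hE hF hΔ, Algebra.algebraMap_eq_smul_one]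
  ext i j
  fin_cases i <;> fin_cases j <;>
    simp [Matrix.mul_apply, Matrix.scalar_apply, mul_add, add_mul, smul_smul, mul_assoc, c1,
      fke, efk, kfk, cfk, pow_two, smul_sub, smul_add]
  · match_scalars <;> (try simp only [hkk]) <;> field_simp <;> ring
  · match_scalars <;> (try simp only [hkk]) <;> field_simp <;> ring
  · simp only [← c2, c4]
    match_scalars <;> (try simp only [hkk]) <;> field_simp <;> ring
  · match_scalars <;> (try simp only [hkk]) <;> field_simp <;> ring
end Del
section fin
open Polynomial

/-- Coefficients of the powers of `δ(c)`. -/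
def AB (p : ℕ) : ℕ → ℂ[X] × ℂ[X]
  | 0 => (1, 0)
  | n + 1 => (-((AB p n).2 * (X ^ 2 + C (kap p))),
      (AB p n).1 + (AB p n).2 * (C (q p + (q p)⁻¹) * X))

variable {p : ℕ}

lemma AB_val (c l r : ℂ) (n : ℕ)
    (h1 : l ^ 2 = (q p + (q p)⁻¹) * c * l - c ^ 2 - kap p)
    (h2 : 2 * l * r = (q p + (q p)⁻¹) * (l + c * r) - 2 * c) :
    (AB p n).1.eval c + (AB p n).2.eval c * l = l ^ n ∧
    (AB p n).1.derivative.eval c + (AB p n).2.derivative.eval c * l + (AB p n).2.eval c * r =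
      (X ^ n : ℂ[X]).derivative.eval l * r := by
  induction n with
  | zero => simp [AB]
  | succ n ih =>
    obtain ⟨i1, i2⟩ := ih
    have e : (X ^ (n + 1) : ℂ[X]).derivative.eval l =
        (X ^ n : ℂ[X]).derivative.eval l * l + l ^ n := by
      rw [pow_succ, derivative_mul]; simp
    rw [e, pow_succ]
    generalize eval l (derivative (X ^ n)) = d at *
    simp only [AB, derivative_neg, derivative_add, derivative_mul, eval_neg, eval_mul, eval_add,
      eval_pow, eval_X, eval_C, derivative_X, derivative_C, eval_zero, eval_one,
      derivative_X_pow]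
    generalize (AB p n).1.eval c = a at *
    generalize (AB p n).2.eval c = b at *
    generalize (AB p n).1.derivative.eval c = a' at *
    generalize (AB p n).2.derivative.eval c = b' at *
    constructor
    · linear_combination l * i1 - b * h1
    · norm_num
      linear_combination l * i2 + r * i1 - b * h2 - b' * h1

lemma AB_sum (hp : 2 ≤ p) (s : ℕ) (h0 : 0 < s) (h1 : s < p) (n : ℕ) :
    qi p s * (2 * (AB p n).1.derivative.eval (ev p 1 s) +
      (q p + (q p)⁻¹) * (X * (AB p n).2).derivative.eval (ev p 1 s)) =
    qi p ((s : ℤ) - 1) * (X ^ n : ℂ[X]).derivative.eval (ev p 1 ((s : ℤ) - 1)) +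
    qi p ((s : ℤ) + 1) * (X ^ n : ℂ[X]).derivative.eval (ev p 1 ((s : ℤ) + 1)) := by
  have hq := q_ne_zero p
  have hd := q_sub_ne p hp
  have hs := qi_ne p hp s h0 h1
  have ht : q p ^ s ≠ 0 := pow_ne_zero _ hq
  have hst : q p ^ s - (q p ^ s)⁻¹ ≠ 0 := by
    intro h; apply hs; simp [qi, h]
  have hst2 : (q p ^ s) ^ 2 - 1 ≠ 0 := by
    intro h; apply hst; field_simp; linear_combination h
  have es : ev p 1 s = q p ^ s + (q p ^ s)⁻¹ := by simp [ev]
  have ep : ev p 1 ((s : ℤ) + 1) = q p ^ s * q p + (q p ^ s)⁻¹ * (q p)⁻¹ := by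
    simp only [ev, one_mul, zpow_neg, zpow_add₀ hq, zpow_natCast, zpow_one, mul_inv]
  have em : ev p 1 ((s : ℤ) - 1) = q p ^ s * (q p)⁻¹ + (q p ^ s)⁻¹ * q p := by
    simp only [ev, one_mul, zpow_neg, zpow_sub₀ hq, zpow_natCast, zpow_one, div_eq_mul_inv,
      mul_inv, inv_inv]
  have rp : qi p ((s : ℤ) + 1) / qi p s =
      (q p ^ s * q p - (q p ^ s)⁻¹ * (q p)⁻¹) / (q p ^ s - (q p ^ s)⁻¹) := by
    simp only [qi, zpow_neg, zpow_add₀ hq, zpow_natCast, zpow_one, mul_inv]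
    rw [div_div_div_cancel_right₀ hd]
  have rm : qi p ((s : ℤ) - 1) / qi p s =
      (q p ^ s * (q p)⁻¹ - (q p ^ s)⁻¹ * q p) / (q p ^ s - (q p ^ s)⁻¹) := by
    unfold qi
    rw [div_div_div_cancel_right₀ hd]
    simp only [zpow_neg, zpow_sub₀ hq, zpow_natCast, zpow_one, div_eq_mul_inv, mul_inv,
      inv_inv]
  have P := AB_val (ev p 1 s) (ev p 1 ((s : ℤ) + 1)) (qi p ((s : ℤ) + 1) / qi p s) n
    (by rw [es, ep]; unfold kap; field_simp; ring)
    (by rw [es, ep, rp]; field_simp; ring)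
  have M := AB_val (ev p 1 s) (ev p 1 ((s : ℤ) - 1)) (qi p ((s : ℤ) - 1) / qi p s) n
    (by rw [es, em]; unfold kap; field_simp; ring)
    (by rw [es, em, rm]; field_simp; ring)
  have S1 : ev p 1 ((s : ℤ) + 1) + ev p 1 ((s : ℤ) - 1) = (q p + (q p)⁻¹) * ev p 1 s := by
    rw [es, ep, em]; ring
  have S2 : qi p ((s : ℤ) + 1) / qi p s + qi p ((s : ℤ) - 1) / qi p s = q p + (q p)⁻¹ := by
    rw [rp, rm]; field_simp; ring
  have P2 := P.2
  have M2 := M.2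
  have r1 : qi p ((s : ℤ) + 1) = qi p s * (qi p ((s : ℤ) + 1) / qi p s) := by field_simp
  have r2 : qi p ((s : ℤ) - 1) = qi p s * (qi p ((s : ℤ) - 1) / qi p s) := by field_simp
  rw [r1, r2]
  generalize qi p ((s : ℤ) + 1) / qi p s = x at *
  generalize qi p ((s : ℤ) - 1) / qi p s = y at *
  rw [derivative_mul, eval_add, eval_mul, eval_mul, derivative_X, eval_one, eval_X]
  generalize eval (ev p 1 ((s : ℤ) + 1)) (derivative (X ^ n)) = u at *
  generalize eval (ev p 1 ((s : ℤ) - 1)) (derivative (X ^ n)) = v at *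
  linear_combination qi p s * (P2 + M2 - (AB p n).2.derivative.eval (ev p 1 s) * S1 -
    (AB p n).2.eval (ev p 1 s) * S2)

variable (ρ : Uq p →ₐ[ℂ] Matrix (Fin 2) (Fin 2) ℂ) (Δ : Uq p →ₐ[ℂ] (Uq p ⊗[ℂ] Uq p))

lemma del_pow (hp : 2 ≤ p) (hK : ρ (KK p) = XK p 1 2) (hE : ρ (EE p) = XE p 1 2)
    (hF : ρ (FF p) = XF 2) (hΔ : IsCoprod p Δ) (n : ℕ) :
    del ρ Δ (cas p) ^ n = Matrix.scalar (Fin 2) (aeval (cas p) (AB p n).1) +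
      Matrix.scalar (Fin 2) (aeval (cas p) (AB p n).2) * del ρ Δ (cas p) := by
  induction n with
  | zero => simp [AB]
  | succ n ih =>
    have e1 : aeval (cas p) (AB p n).2 * -(cas p ^ 2 + algebraMap ℂ (Uq p) (kap p)) =
        aeval (cas p) (AB p (n + 1)).1 := by
      simp only [AB, map_add, map_mul, map_neg, map_pow, aeval_X, aeval_C]
      first | exact mul_neg (α := Uq p) _ _ | erw [mul_neg] | exact (eq_neg_of_add_eq_zero_left (by rw [← mul_add, neg_add_cancel, mul_zero]))
    have e2 : aeval (cas p) (AB p n).1 + aeval (cas p) (AB p n).2 * ((q p + (q p)⁻¹) • cas p) =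
        aeval (cas p) (AB p (n + 1)).2 := by
      simp only [AB, map_add, map_mul, aeval_X, aeval_C, Algebra.smul_def]
    rw [pow_succ, ih, add_mul, mul_assoc, del_quad ρ Δ hp hK hE hF hΔ, mul_add, ← mul_assoc,
      ← map_mul, ← map_mul, e1, ← e2, map_add, add_mul, add_left_comm]

lemma del_Kpow (hK : ρ (KK p) = XK p 1 2) (hΔ : IsCoprod p Δ) (j : ℕ) :
    del ρ Δ (KK p ^ j) = !![q p ^ j • KK p ^ j, 0; 0, ((q p)⁻¹) ^ j • KK p ^ j] := by
  rw [map_pow, del_K ρ Δ hK hΔ]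
  induction j with
  | zero => ext i j; fin_cases i <;> fin_cases j <;> simp
  | succ j ih =>
    rw [pow_succ, ih]
    ext i j; fin_cases i <;> fin_cases j <;> simp [smul_smul, pow_succ]

lemma conv_eval (hp : 2 ≤ p) (hK : ρ (KK p) = XK p 1 2) (hE : ρ (EE p) = XE p 1 2)
    (hF : ρ (FF p) = XF 2) (hΔ : IsCoprod p Δ) (φ : Uq p →ₗ[ℂ] ℂ) (n j : ℕ) :
    conv p Δ (chiOf p ρ) φ (cas p ^ n * KK p ^ j) =
      q p ^ j * (φ (aeval (cas p) ((AB p n).1 + C ((q p)⁻¹) * (X * (AB p n).2)) * KK p ^ j) +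
        (q p ^ 2 - 1) * φ (aeval (cas p) (AB p n).2 * KK p ^ (j + 1))) +
      (q p)⁻¹ ^ j * (φ (aeval (cas p) ((AB p n).1 + C (q p) * (X * (AB p n).2)) * KK p ^ j) +
        ((q p ^ 2)⁻¹ - 1) * φ (aeval (cas p) (AB p n).2 * KK p ^ (j + 1))) := by
  rw [conv_apply]
  have e : rid ρ (Δ (cas p ^ n * KK p ^ j)) = del ρ Δ (cas p) ^ n * del ρ Δ (KK p ^ j) := by
    rw [← map_pow, ← map_mul]; rfl
  rw [e, del_pow ρ Δ hp hK hE hF hΔ, del_Kpow ρ Δ hK hΔ, del_cas ρ Δ hp hK hE hF hΔ]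
  have cx : ∀ f : ℂ[X], aeval (cas p) f * cas p = aeval (cas p) (X * f) := by
    intro f; rw [mul_comm X f, map_mul, aeval_X]
  have cc : ∀ (a : ℂ) (f : ℂ[X]), aeval (cas p) (C a * f) = a • aeval (cas p) f := by
    intro a f; rw [map_mul, aeval_C, Algebra.smul_def]
  congr 1
  · rw [← smul_eq_mul (_ ^ j), ← smul_eq_mul (q p ^ 2 - 1), ← map_smul φ, ← map_add φ, ← map_smul φ]
    congr 1
    simp only [Matrix.mul_apply, Fin.sum_univ_two, Matrix.add_apply, Matrix.scalar_apply]
    simp [mul_add, add_mul, mul_smul_comm, smul_mul_assoc, smul_smul, mul_assoc, pow_succ',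
      -aeval_C, cc]
    have := cx (AB p n).2
    rw [← mul_assoc (aeval (cas p) (AB p n).2) (cas p), this, map_mul, aeval_X, mul_assoc]
    module
  · rw [← smul_eq_mul (_ ^ j), ← smul_eq_mul ((q p ^ 2)⁻¹ - 1), ← map_smul φ, ← map_add φ, ← map_smul φ]
    congr 1
    simp only [Matrix.mul_apply, Fin.sum_univ_two, Matrix.add_apply, Matrix.scalar_apply]
    simp [mul_add, add_mul, mul_smul_comm, smul_mul_assoc, smul_smul, mul_assoc, pow_succ',
      -aeval_C, cc]
    have := cx (AB p n).2
    rw [← mul_assoc (aeval (cas p) (AB p n).2) (cas p), this, map_mul, aeval_X, mul_assoc]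
    module

lemma conv_conj (hK : ρ (KK p) = XK p 1 2) (hΔ : IsCoprod p Δ) (φ : Uq p →ₗ[ℂ] ℂ)
    (hφ : ∀ x, φ (KK p * x * KKinv p) = φ x) (x : Uq p) :
    conv p Δ (chiOf p ρ) φ (KK p * x * KKinv p) = conv p Δ (chiOf p ρ) φ x := by
  have hq := q_ne_zero p
  rw [conv_apply, conv_apply]
  have e : rid ρ (Δ (KK p * x * KKinv p)) = del ρ Δ (KK p) * rid ρ (Δ x) * del ρ Δ (KKinv p) := by
    rw [map_mul, map_mul, map_mul, map_mul]; rfl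
  rw [e, del_K ρ Δ hK hΔ, del_Kinv ρ Δ hK hΔ]
  congr 1
  · rw [← hφ (rid ρ (Δ x) 0 0)]
    simp only [Matrix.mul_apply, Fin.sum_univ_two]
    simp [smul_mul_assoc, mul_smul_comm, smul_smul, hq]
  · rw [← hφ (rid ρ (Δ x) 1 1)]
    simp only [Matrix.mul_apply, Fin.sum_univ_two]
    simp [smul_mul_assoc, mul_smul_comm, smul_smul, hq]

/-- The part `qi • GOf` at a possibly degenerate index. -/
lemma smulG_eval (ρP : (α : ℂ) → (s : ℕ) → (Uq p →ₐ[ℂ] Matrix (PIdx p s) (PIdx p s) ℂ))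
    (hp : 2 ≤ p) (hP : IsPRep p ρP) (s : ℕ) (h1 : s ≤ p) (n j : ℕ) :
    qi p s * GOf p ρP s (cas p ^ n * KK p ^ j) =
      qi p s * (kap p * (X ^ n : ℂ[X]).derivative.eval (ev p 1 s) *
        ((q p ^ ((s : ℤ) - 1)) ^ j * Wj p j)) ∧
    ∀ x, qi p s * GOf p ρP s (KK p * x * KKinv p) = qi p s * GOf p ρP s x := by
  by_cases h : 0 < s ∧ s < p
  · have := GOf_eval ρP hp hP s h.1 h.2 (X ^ n) j
    rw [map_pow, aeval_X] at this
    exact ⟨by rw [this], fun x => by rw [GOf_conj ρP hP s h.1 h.2]⟩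
  · have z : qi p s = 0 := by
      have : s = 0 ∨ s = p := by omega
      rcases this with rfl | rfl
      · simp [qi]
      · simp only [qi, zpow_neg, zpow_natCast, q_pow_p s hp]; norm_num
    rw [z]; simp

theorem main_rel (hp : 2 ≤ p)
    (ρP : (α : ℂ) → (s : ℕ) → (Uq p →ₐ[ℂ] Matrix (PIdx p s) (PIdx p s) ℂ))
    (hP : IsPRep p ρP) (hK : ρ (KK p) = XK p 1 2) (hE : ρ (EE p) = XE p 1 2)
    (hF : ρ (FF p) = XF 2) (hΔ : IsCoprod p Δ) (s : ℕ) (h0 : 0 < s) (h1 : s < p) :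
    qi p s • conv p Δ (chiOf p ρ) (GOf p ρP s) =
        qi p ((s : ℤ) - 1) • GOf p ρP (s - 1) + qi p ((s : ℤ) + 1) • GOf p ρP (s + 1) := by
  have hq := q_ne_zero p
  have c1 : ((s - 1 : ℕ) : ℤ) = s - 1 := by omega
  have c2 : ((s + 1 : ℕ) : ℤ) = s + 1 := by omega
  rw [← sub_eq_zero]
  apply ext_form p hp
  · intro x
    have a := (smulG_eval ρP hp hP (s - 1) (by omega) 0 0).2 x
    have b := (smulG_eval ρP hp hP (s + 1) (by omega) 0 0).2 x
    rw [c1] at a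
    rw [c2] at b
    have c := conv_conj ρ Δ hK hΔ (GOf p ρP s) (GOf_conj ρP hP s h0 h1) x
    simp only [LinearMap.sub_apply, LinearMap.add_apply, LinearMap.smul_apply, smul_eq_mul, a, b, c]
  · intro n j
    have a := (smulG_eval ρP hp hP (s - 1) (by omega) n j).1
    have b := (smulG_eval ρP hp hP (s + 1) (by omega) n j).1
    rw [c1] at a
    rw [c2] at b
    simp only [LinearMap.sub_apply, LinearMap.add_apply, LinearMap.smul_apply, smul_eq_mul, a, b]
    rw [conv_eval ρ Δ hp hK hE hF hΔ]
    simp only [GOf_eval ρP hp hP s h0 h1]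
    have S := AB_sum hp s h0 h1 n
    have w1 := Wj_id hp j
    have w2 := Wj_id hp (j + 1)
    have x1 : q p ^ ((s : ℤ) - 1 - 1) = q p ^ ((s : ℤ) - 1) * (q p)⁻¹ := by
      rw [zpow_sub₀ hq]; simp [div_eq_mul_inv]
    have x2 : q p ^ ((s : ℤ) + 1 - 1) = q p ^ ((s : ℤ) - 1) * q p := by
      rw [← zpow_add_one₀ hq]; congr 1; ring
    rw [x1, x2]
    simp only [derivative_add, derivative_C_mul, eval_add, eval_mul, eval_C]
    generalize (X * (AB p n).2).derivative.eval (ev p 1 s) = B at *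
    generalize (AB p n).2.derivative.eval (ev p 1 s) = B' at *
    generalize (AB p n).1.derivative.eval (ev p 1 s) = A at *
    generalize eval (ev p 1 ((s : ℤ) + 1)) (derivative (X ^ n)) = u at *
    generalize eval (ev p 1 ((s : ℤ) - 1)) (derivative (X ^ n)) = v at *
    generalize q p ^ ((s : ℤ) - 1) = t at *
    have w1' : (q p)⁻¹ ^ j * Wj p j = q p ^ j * Wj p j := by
      rw [inv_pow]; field_simp; rw [← pow_mul] at w1; rw [← pow_mul, mul_comm j 2]
      exact w1.symm
    have w2' : (q p)⁻¹ ^ (j + 1) * Wj p (j + 1) = q p ^ (j + 1) * Wj p (j + 1) := by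
      rw [inv_pow]; field_simp; rw [← pow_mul] at w2; rw [← pow_mul, mul_comm (j + 1) 2]
      exact w2.symm
    have k2 : (q p ^ j * (q p ^ 2 - 1) + (q p)⁻¹ ^ j * ((q p ^ 2)⁻¹ - 1)) * Wj p (j + 1) = 0 := by
      have : (q p ^ j * (q p ^ 2 - 1) + (q p)⁻¹ ^ j * ((q p ^ 2)⁻¹ - 1)) =
          (q p - (q p)⁻¹) * (q p ^ (j + 1) - (q p)⁻¹ ^ (j + 1)) := by
        rw [inv_pow, inv_pow]; field_simp; ring
      rw [this]
      linear_combination -(q p - (q p)⁻¹) * w2'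
    rw [mul_pow, mul_pow]
    linear_combination qi p s * kap p * B' * t ^ (j + 1) * k2 + kap p * t ^ j * q p ^ j * Wj p j * S
      + (qi p s * kap p * t ^ j * (A + q p * B) - kap p * t ^ j * v * qi p (s - 1)) * w1'

end fin
/-- in `SLF(Ū_q)`, `[s]·(χ^+_2 G_s) = [s-1] G_{s-1} + [s+1] G_{s+1}`
(with the conventions `G_0 = 0`, `G_p = 0`, here automatic since `[0] = [p] = 0`);
explicitly `χ^+_2 G_1 = [2] G_2`, `χ^+_2 G_s = ([s-1]/[s]) G_{s-1} + ([s+1]/[s]) G_{s+1}`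
for `2 ≤ s ≤ p-2`, and `χ^+_2 G_{p-1} = [2] G_{p-2}`. -/
theorem statement_13 (p : ℕ) (hp : 2 ≤ p)
    (ρX : (α : ℂ) → (s : ℕ) → (Uq p →ₐ[ℂ] Matrix (Fin s) (Fin s) ℂ))
    (hX : IsXRep p ρX)
    (ρP : (α : ℂ) → (s : ℕ) → (Uq p →ₐ[ℂ] Matrix (PIdx p s) (PIdx p s) ℂ))
    (hP : IsPRep p ρP)
    (Δ : Uq p →ₐ[ℂ] (Uq p ⊗[ℂ] Uq p)) (hΔ : IsCoprod p Δ) :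
    (∀ s : ℕ, 1 ≤ s → s ≤ p - 1 →
      qi p s • conv p Δ (chiOf p (ρX 1 2)) (GOf p ρP s) =
        qi p ((s : ℤ) - 1) • GOf p ρP (s - 1) + qi p ((s : ℤ) + 1) • GOf p ρP (s + 1))
    ∧ conv p Δ (chiOf p (ρX 1 2)) (GOf p ρP 1) = qi p 2 • GOf p ρP 2
    ∧ (∀ s : ℕ, 2 ≤ s → s ≤ p - 2 →
        conv p Δ (chiOf p (ρX 1 2)) (GOf p ρP s) =
          (qi p ((s : ℤ) - 1) / qi p s) • GOf p ρP (s - 1)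
            + (qi p ((s : ℤ) + 1) / qi p s) • GOf p ρP (s + 1))
    ∧ conv p Δ (chiOf p (ρX 1 2)) (GOf p ρP (p - 1)) = qi p 2 • GOf p ρP (p - 2) := by
  have hX' := hX 1 (Or.inl rfl) 2 (by omega) hp
  have main : ∀ s : ℕ, 1 ≤ s → s ≤ p - 1 →
      qi p s • conv p Δ (chiOf p (ρX 1 2)) (GOf p ρP s) =
        qi p ((s : ℤ) - 1) • GOf p ρP (s - 1) + qi p ((s : ℤ) + 1) • GOf p ρP (s + 1) :=
    fun s h0 h1 => main_rel (ρX 1 2) Δ hp ρP hP hX'.1 hX'.2.1 hX'.2.2 hΔ s h0 (by omega)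
  have hq := q_ne_zero p
  have hd := q_sub_ne p hp
  have q0 : qi p 0 = 0 := by simp [qi]
  have q1 : qi p 1 = 1 := by simp [qi, hd]
  have refl : ∀ k : ℤ, qi p ((p : ℤ) - k) = qi p k := by
    intro k
    have hpp := q_pow_p p hp
    unfold qi
    rw [neg_sub, zpow_sub₀ hq, zpow_sub₀ hq, zpow_natCast, hpp, zpow_neg]
    congr 1
    ring
  refine ⟨main, ?_, ?_, ?_⟩
  · have := main 1 le_rfl (by omega)
    simpa [q0, q1] using this
  · intro s h0 h1
    have hs := qi_ne p hp s (by omega) (by omega)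
    have := main s (by omega) (by omega)
    have h2 := congrArg (fun z => (qi p s)⁻¹ • z) this
    simp only [smul_smul, smul_add, inv_mul_cancel₀ hs, one_smul] at h2
    rw [h2, div_eq_inv_mul, div_eq_inv_mul]
  · have := main (p - 1) (by omega) le_rfl
    have e1 : ((p - 1 : ℕ) : ℤ) = (p : ℤ) - 1 := by omega
    have e2 : (p : ℤ) - 1 - 1 = p - 2 := by ring
    have e3 : (p : ℤ) - 1 + 1 = p - 0 := by ring
    rw [e1, e2, e3, refl, refl, refl, q0, q1, one_smul, zero_smul, add_zero,
      show p - 1 - 1 = p - 2 by omega] at this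
    exact this


end Uqsl2
end
end

section
/- In the algebra SLF(Ū_q) with convolution product, for every 1 ≤ s ≤ p−1 one has χ^−_1 G_s = −G_{p−s}. -/
noncomputable section

open scoped TensorProduct

namespace Uqsl2

/-- The twisting endomorphism of the algebra by a one-dimensional representation. -/
def twist (p : ℕ) (Δ : Uq p →ₐ[ℂ] (Uq p ⊗[ℂ] Uq p)) (χ : Uq p →ₐ[ℂ] ℂ) : Uq p →ₐ[ℂ] Uq p :=
  ((Algebra.TensorProduct.lid ℂ (Uq p)).toAlgHom.comp
    (Algebra.TensorProduct.map χ (AlgHom.id ℂ (Uq p)))).comp Δ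

theorem conv_eq_twist (p : ℕ) (Δ : Uq p →ₐ[ℂ] (Uq p ⊗[ℂ] Uq p)) (χ : Uq p →ₐ[ℂ] ℂ)
    (ψ : Uq p →ₗ[ℂ] ℂ) (u : Uq p) :
    conv p Δ χ.toLinearMap ψ u = ψ (twist p Δ χ u) := by
  simp only [conv, twist, LinearMap.comp_apply, AlgHom.comp_apply, AlgHom.toLinearMap_apply]
  induction Δ u using TensorProduct.induction_on with
  | zero => simp
  | tmul x y => simp
  | add x y hx hy => simp only [map_add, hx, hy]

/-- The diagonal change of basis. -/
def dd (p s : ℕ) : PIdx p s → ℂ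
  | .inl i => (-1) ^ (i : ℕ)
  | .inr (.inl j) => (-1) ^ (p - s + 1 + (j : ℕ))
  | .inr (.inr (.inl k)) => (-1) ^ (s + (k : ℕ))
  | .inr (.inr (.inr l)) => (-1) ^ ((l : ℕ) + 1)

theorem PK_dd (p s : ℕ) (α : ℂ) :
    (-PK p α s) * Matrix.diagonal (dd p s) = Matrix.diagonal (dd p s) * PK p (-α) s := by
  ext i j
  rw [Matrix.mul_diagonal, Matrix.diagonal_mul, Matrix.neg_apply, PK, PK]
  by_cases hij : i = j
  · subst hij
    rw [Matrix.diagonal_apply_eq, Matrix.diagonal_apply_eq]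
    rcases i with i | i | i | i <;> simp only [PKdiag, dd] <;> ring
  · rw [Matrix.diagonal_apply_ne _ hij, Matrix.diagonal_apply_ne _ hij]; simp

theorem PE_dd (p s : ℕ) (α : ℂ) :
    PE p α s * Matrix.diagonal (dd p s) = Matrix.diagonal (dd p s) * PE p (-α) s := by
  ext i j
  rw [Matrix.mul_diagonal, Matrix.diagonal_mul]
  rcases i with i | i | i | i <;> rcases j with j | j | j | j <;>
    simp only [PE, dd, Matrix.of_apply, zero_mul, mul_zero] <;> split_ifs with h <;>
    try simp only [zero_mul, mul_zero]
  · rw [← h]; ring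
  · have h' : p - s + 1 + (i : ℕ) = 2 * (i + 1) := by omega
    rw [h.1, h', pow_mul]; simp
  · rw [← h]; ring
  · rw [← h]; ring
  · rw [← h]; ring
  · rw [h.1, h.2]; ring
  · rw [← h]; ring

theorem PF_dd (p s : ℕ) :
    (-PF p s) * Matrix.diagonal (dd p s) = Matrix.diagonal (dd p s) * PF p s := by
  ext i j
  rw [Matrix.mul_diagonal, Matrix.diagonal_mul, Matrix.neg_apply]
  rcases i with i | i | i | i <;> rcases j with j | j | j | j <;>
    simp only [PF, dd, Matrix.of_apply, zero_mul, mul_zero, neg_zero] <;> split_ifs with h <;>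
    try simp only [zero_mul, mul_zero, neg_zero]
  · rw [h]; ring
  · rw [h]; ring
  · have h' : s + (i : ℕ) = j + 1 := by omega
    rw [h']; ring
  · rw [h]; ring
  · have h' : p - s + 1 + (j : ℕ) = 2 * (j + 1) := by omega
    rw [h.2, h', pow_mul]; simp
  · rw [h]; ring

theorem KK_mul_KKinv (p : ℕ) : KK p * KKinv p = 1 := by
  rw [KK, KKinv, ← map_mul, RingQuot.mkAlgHom_rel ℂ (rel.KKinv), map_one]

theorem KKinv_mul_KK (p : ℕ) : KKinv p * KK p = 1 := by
  rw [KK, KKinv, ← map_mul, RingQuot.mkAlgHom_rel ℂ (rel.KinvK), map_one]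

theorem intertwine (p : ℕ) {n : Type} [Fintype n] [DecidableEq n]
    (f g : Uq p →ₐ[ℂ] Matrix n n ℂ) (D : Matrix n n ℂ)
    (hE : f (EE p) * D = D * g (EE p)) (hF : f (FF p) * D = D * g (FF p))
    (hK : f (KK p) * D = D * g (KK p)) (u : Uq p) : f u * D = D * g u := by
  obtain ⟨w, rfl⟩ := RingQuot.mkAlgHom_surjective ℂ (rel p) u
  induction w using FreeAlgebra.induction with
  | grade0 r => simp [Algebra.commutes]
  | grade1 x =>
    cases x with
    | E => exact hE
    | F => exact hF
    | K => exact hK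
    | Kinv =>
      change f (KKinv p) * D = D * g (KKinv p)
      have h1 : f (KKinv p) * f (KK p) = 1 := by rw [← map_mul, KKinv_mul_KK, map_one]
      have h2 : g (KK p) * g (KKinv p) = 1 := by rw [← map_mul, KK_mul_KKinv, map_one]
      calc f (KKinv p) * D = f (KKinv p) * (D * (g (KK p) * g (KKinv p))) := by
            rw [h2, mul_one]
        _ = (f (KKinv p) * f (KK p)) * D * g (KKinv p) := by
            rw [← mul_assoc D, ← hK]; simp only [mul_assoc]
        _ = _ := by rw [h1, one_mul]
  | mul a b ha hb =>
    rw [map_mul, map_mul, map_mul, mul_assoc, hb, ← mul_assoc, ha, mul_assoc]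
  | add a b ha hb => rw [map_add, map_add, map_add, add_mul, mul_add, ha, hb]

/-- The trace of the block `H^α_s`. -/
def trH (p : ℕ)
    (ρP : (α : ℂ) → (s : ℕ) → (Uq p →ₐ[ℂ] Matrix (PIdx p s) (PIdx p s) ℂ))
    (α : ℂ) (s : ℕ) (u : Uq p) : ℂ :=
  ∑ i : Fin s, ρP α s u (Sum.inr (Sum.inr (Sum.inr i))) (Sum.inl i)

theorem GOf_apply (p : ℕ)
    (ρP : (α : ℂ) → (s : ℕ) → (Uq p →ₐ[ℂ] Matrix (PIdx p s) (PIdx p s) ℂ))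
    (s : ℕ) (u : Uq p) : GOf p ρP s u = trH p ρP 1 s u + trH p ρP (-1) (p - s) u := by
  simp only [GOf, trH, LinearMap.add_apply, LinearMap.sum_apply, LinearMap.comp_apply]
  rfl

theorem trH_twist (p : ℕ)
    (ρP : (α : ℂ) → (s : ℕ) → (Uq p →ₐ[ℂ] Matrix (PIdx p s) (PIdx p s) ℂ))
    (hP : IsPRep p ρP) (σ : Uq p →ₐ[ℂ] Uq p) (hE : σ (EE p) = EE p) (hF : σ (FF p) = (-1 : ℂ) • FF p)
    (hK : σ (KK p) = (-1 : ℂ) • KK p) (α : ℂ) (hα : α = 1 ∨ α = -1) (s : ℕ) (h1 : 1 ≤ s)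
    (h2 : s ≤ p - 1) (u : Uq p) : trH p ρP α s (σ u) = -trH p ρP (-α) s u := by
  have hα' : -α = 1 ∨ -α = -1 := by
    rcases hα with h | h <;> simp [h]
  obtain ⟨k1, e1, f1⟩ := hP α hα s h1 h2
  obtain ⟨k2, e2, f2⟩ := hP (-α) hα' s h1 h2
  have key := intertwine p ((ρP α s).comp σ) (ρP (-α) s) (Matrix.diagonal (dd p s))
    (by rw [AlgHom.comp_apply, hE, e1, e2, PE_dd])
    (by rw [AlgHom.comp_apply, hF, map_smul, neg_one_smul, f1, f2, PF_dd])
    (by rw [AlgHom.comp_apply, hK, map_smul, neg_one_smul, k1, k2, PK_dd]) u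
  rw [trH, trH, ← Finset.sum_neg_distrib]
  refine Finset.sum_congr rfl fun i _ => ?_
  have h := congrFun (congrFun key (Sum.inr (Sum.inr (Sum.inr i)))) (Sum.inl i)
  rw [Matrix.mul_diagonal, Matrix.diagonal_mul, AlgHom.comp_apply] at h
  simp only [dd] at h
  have hne : ((-1 : ℂ) ^ (i : ℕ)) ≠ 0 := pow_ne_zero _ (by norm_num)
  apply mul_right_cancel₀ hne
  rw [h]; ring

/-- in `SLF(Ū_q)`, `χ^-_1 G_s = -G_{p-s}` for all `1 ≤ s ≤ p-1`. -/
theorem statement_14 (p : ℕ) (hp : 2 ≤ p)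
    (ρX : (α : ℂ) → (s : ℕ) → (Uq p →ₐ[ℂ] Matrix (Fin s) (Fin s) ℂ))
    (hX : IsXRep p ρX)
    (ρP : (α : ℂ) → (s : ℕ) → (Uq p →ₐ[ℂ] Matrix (PIdx p s) (PIdx p s) ℂ))
    (hP : IsPRep p ρP)
    (Δ : Uq p →ₐ[ℂ] (Uq p ⊗[ℂ] Uq p)) (hΔ : IsCoprod p Δ) :
    ∀ s : ℕ, 1 ≤ s → s ≤ p - 1 →
      conv p Δ (chiOf p (ρX (-1) 1)) (GOf p ρP s) = -GOf p ρP (p - s) := by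
  intro s h1 h2
  obtain ⟨xK, xE, xF⟩ := hX (-1) (Or.inr rfl) 1 le_rfl (by omega)
  obtain ⟨dE, dF, dK, -⟩ := hΔ
  let χ : Uq p →ₐ[ℂ] ℂ := AlgHom.ofLinearMap ((entry (0 : Fin 1) 0).comp (ρX (-1) 1).toLinearMap)
    (by
      change ρX (-1) 1 1 0 0 = 1
      simp)
    (by
      intro x y
      change ρX (-1) 1 (x * y) 0 0 = ρX (-1) 1 x 0 0 * ρX (-1) 1 y 0 0
      simp [Matrix.mul_apply])
  have hχ : ∀ u, χ u = ρX (-1) 1 u 0 0 := fun u => rfl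
  have hchi : chiOf p (ρX (-1) 1) = χ.toLinearMap := by
    ext u
    simp [chiOf, hχ, Matrix.trace]
  have cK : χ (KK p) = -1 := by rw [hχ, xK]; simp [XK]
  have cE : χ (EE p) = 0 := by rw [hχ, xE]; simp [XE]
  have cF : χ (FF p) = 0 := by rw [hχ, xF]; simp [XF]
  have cKi : χ (KKinv p) = -1 := by
    have h : χ (KK p) * χ (KKinv p) = 1 := by rw [← map_mul, KK_mul_KKinv, map_one]
    rw [cK] at h
    linear_combination -h
  have sE : twist p Δ χ (EE p) = EE p := by simp [twist, dE, cE]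
  have sF : twist p Δ χ (FF p) = (-1 : ℂ) • FF p := by simp [twist, dF, cF, cKi]
  have sK : twist p Δ χ (KK p) = (-1 : ℂ) • KK p := by simp [twist, dK, cK]
  ext u
  rw [hchi, conv_eq_twist, LinearMap.neg_apply, GOf_apply, GOf_apply, Nat.sub_sub_self (by omega),
    trH_twist p ρP hP _ sE sF sK 1 (Or.inl rfl) s h1 h2,
    trH_twist p ρP hP _ sE sF sK (-1) (Or.inr rfl) (p - s) (by omega) (by omega), neg_neg]
  ring


end Uqsl2
end
end
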